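/- Let I be a monomial ideal of the polynomial ring S = K[x_1,...,x_n] over a field K. Then v(I^k) ≥ α(I)·k − 1 for all integers k ≥ 1, where α(I) is the initial degree of I. -/

import Mathlib

open MvPolynomial

noncomputable section

variable (K : Type*) [Field K]

/-- The set of associated primes of `S/I`. -/
def assPrimes {σ : Type*} (I : Ideal (MvPolynomial σ K)) : Set (Ideal (MvPolynomial σ K)) :=
  associatedPrimes (MvPolynomial σ K) (MvPolynomial σ K ⧸ I)

/-- The v-number of `I` at a prime `p`:
`min {d : ∃ homogeneous f of degree d with (I : f) = p}`. -/
def vNumberAt {σ : Type*} (I p : Ideal (MvPolynomial σ K)) : ℕ :=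
  sInf {d | ∃ f : MvPolynomial σ K, f.IsHomogeneous d ∧ I.colon (Ideal.span {f}) = p}

/-- The v-number of `I`:
`min {d : ∃ homogeneous f of degree d with (I : f) ∈ Ass(I)}`. -/
def vNumber {σ : Type*} (I : Ideal (MvPolynomial σ K)) : ℕ :=
  sInf {d | ∃ f : MvPolynomial σ K, f.IsHomogeneous d ∧
    I.colon (Ideal.span {f}) ∈ assPrimes K I}

/-- The initial degree `α(I) = min {d : I_d ≠ 0}`. -/
def initialDegree {σ : Type*} (I : Ideal (MvPolynomial σ K)) : ℕ :=
  sInf {d | ∃ f ∈ I, f ≠ 0 ∧ f.IsHomogeneous d}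

/-- A monomial ideal: an ideal generated by monomials. -/
def IsMonomialIdeal {σ : Type*} (I : Ideal (MvPolynomial σ K)) : Prop :=
  ∃ A : Set (σ →₀ ℕ), I = Ideal.span ((fun m => (monomial m (1 : K) : MvPolynomial σ K)) '' A)

/-!
Powers of monomial ideals are monomial and `α(I^k) = α(I) k`, so it is enough to show
`deg f + 1 ≥ α(J)` whenever `J` is a nonzero proper monomial ideal and `f` a form with `(J : f)`
prime. This prime contains a monomial of `J`, hence a variable `x_i`, and then `x_i f` is a nonzero
form in `J`. Such an `f` exists, so that `v(J)` is an honest minimum: a maximal element among the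
proper ideals `(J : x^u)` is a monomial ideal that is prime on monomials, hence it is generated by
variables.
-/

section Semiring

variable {R σ : Type*} [CommSemiring R]

theorem exists_X_mem_of_monomial_mem {P : Ideal (MvPolynomial σ R)} (hP : P.IsPrime)
    {m : σ →₀ ℕ} (hm : monomial m 1 ∈ P) : ∃ i ∈ m.support, X i ∈ P := by
  rw [← prod_X_pow_eq_monomial, hP.prod_mem_iff] at hm
  obtain ⟨i, hi, hXi⟩ := hm
  exact ⟨i, hi, hP.mem_of_pow_mem _ hXi⟩

theorem le_of_mem_idealOfVars_pow {f : MvPolynomial σ R} {d e : ℕ} (hf : f.IsHomogeneous d)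
    (hf0 : f ≠ 0) (hmem : f ∈ idealOfVars σ R ^ e) : e ≤ d := by
  obtain ⟨m, hm⟩ := support_nonempty.mpr hf0
  rw [hf.degree_eq_sum_deg_support hm]
  exact (mem_pow_idealOfVars_iff _ _).mp hmem m hm

theorem monomial_mem_colon_monomial {J : Ideal (MvPolynomial σ R)} {u m : σ →₀ ℕ} :
    monomial m 1 ∈ J.colon {monomial u 1} ↔ monomial (m + u) 1 ∈ J := by
  rw [Submodule.mem_colon_singleton, smul_eq_mul, monomial_mul, one_mul]

theorem colon_monomial_le_colon_monomial_add (J : Ideal (MvPolynomial σ R)) (u b : σ →₀ ℕ) :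
    J.colon {monomial u 1} ≤ J.colon {monomial (b + u) 1} := by
  intro f hf
  rw [Submodule.mem_colon_singleton, smul_eq_mul] at hf ⊢
  have h := J.mul_mem_left (monomial b 1) hf
  rwa [mul_left_comm, monomial_mul, one_mul] at h

theorem eq_span_X_image_of_forall_monomial {P : Ideal (MvPolynomial σ R)} (hne : P ≠ ⊤)
    (hmon : ∀ f ∈ P, ∀ m ∈ f.support, monomial m 1 ∈ P)
    (hprime : ∀ a b, monomial (a + b) 1 ∈ P → monomial a 1 ∈ P ∨ monomial b 1 ∈ P) :
    P = Ideal.span (X '' {i | X i ∈ P}) := by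
  let N : AddSubmonoid (σ →₀ ℕ) :=
    { carrier := {m | monomial m 1 ∉ P}
      zero_mem' := (Ideal.ne_top_iff_one P).mp hne
      add_mem' := fun ha hb hab => (hprime _ _ hab).elim ha hb }
  refine le_antisymm (fun f hf => mem_ideal_span_X_image.mpr fun m hm => ?_)
    (Ideal.span_le.mpr <| Set.image_subset_iff.mpr fun _ hi => hi)
  by_contra! hX
  have hmN : m ∈ N := by
    rw [← m.sum_single]
    refine N.sum_mem fun i hi => ?_
    rw [← Finsupp.smul_single_one]
    exact N.nsmul_mem (fun hXi => Finsupp.mem_support_iff.mp hi (hX i hXi)) _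
  exact hmN (hmon f hf m hm)

end Semiring

section Ring

variable {R σ : Type*} [CommRing R]

theorem colon_singleton_mem_associatedPrimes_quotient {I : Ideal R} {x : R}
    (h : (I.colon {x}).IsPrime) : I.colon {x} ∈ associatedPrimes R (R ⧸ I) := by
  refine ⟨h, Ideal.Quotient.mk I x, ?_⟩
  have hcolon : (⊥ : Submodule R (R ⧸ I)).colon {Ideal.Quotient.mk I x} = I.colon {x} := by
    ext r
    rw [Submodule.mem_colon_singleton, Submodule.mem_colon_singleton, Submodule.mem_bot,
      ← Ideal.Quotient.eq_zero_iff_mem, smul_eq_mul, map_mul]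
    rfl
  rw [hcolon, h.radical]

variable [IsDomain R]

theorem isPrime_span_X_image (s : Set σ) :
    (Ideal.span (X '' s : Set (MvPolynomial σ R))).IsPrime := by
  set I : Ideal (MvPolynomial σ R) := Ideal.span (X '' s)
  let killVars : MvPolynomial σ R →ₐ[R] MvPolynomial σ R := aeval (sᶜ.indicator X)
  have mk_killVars : (Ideal.Quotient.mkₐ R I).comp killVars = Ideal.Quotient.mkₐ R I := by
    refine algHom_ext fun i => ?_
    by_cases hi : i ∈ s
    · have hXi : Ideal.Quotient.mk I (X i) = 0 :=
        Ideal.Quotient.eq_zero_iff_mem.mpr (Ideal.subset_span ⟨i, hi, rfl⟩)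
      simp [killVars, hi, hXi]
    · simp [killVars, hi]
  have hker : I = RingHom.ker killVars := by
    refine le_antisymm (Ideal.span_le.mpr ?_) fun f hf => ?_
    · rintro _ ⟨i, hi, rfl⟩
      simp [killVars, hi]
    · rw [← Ideal.Quotient.eq_zero_iff_mem, ← Ideal.Quotient.mkₐ_eq_mk R, ← mk_killVars,
        AlgHom.comp_apply, (RingHom.mem_ker).mp hf, map_zero]
  rw [hker]
  exact RingHom.ker_isPrime _

theorem isPrime_of_forall_monomial {P : Ideal (MvPolynomial σ R)} (hne : P ≠ ⊤)
    (hmon : ∀ f ∈ P, ∀ m ∈ f.support, monomial m 1 ∈ P)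
    (hprime : ∀ a b, monomial (a + b) 1 ∈ P → monomial a 1 ∈ P ∨ monomial b 1 ∈ P) :
    P.IsPrime := by
  rw [eq_span_X_image_of_forall_monomial hne hmon hprime]
  exact isPrime_span_X_image _

end Ring

section Field

variable {K} {σ : Type*} {I J : Ideal (MvPolynomial σ K)}

attribute [local instance] MvPolynomial.gradedAlgebra

theorem initialDegree_bot : initialDegree K (⊥ : Ideal (MvPolynomial σ K)) = 0 := by
  simp +contextual [initialDegree]

theorem initialDegree_top : initialDegree K (⊤ : Ideal (MvPolynomial σ K)) = 0 :=
  Nat.sInf_eq_zero.mpr <| .inl ⟨1, trivial, one_ne_zero, isHomogeneous_one σ K⟩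

theorem initialDegree_le {f : MvPolynomial σ K} {d : ℕ} (hf : f ∈ I) (hf0 : f ≠ 0)
    (hfd : f.IsHomogeneous d) : initialDegree K I ≤ d :=
  Nat.sInf_le ⟨f, hf, hf0, hfd⟩

theorem le_idealOfVars_pow_initialDegree (hI : I.IsHomogeneous (homogeneousSubmodule σ K)) :
    I ≤ idealOfVars σ K ^ initialDegree K I := by
  refine fun f hf => (mem_pow_idealOfVars_iff _ _).mpr fun m hm => ?_
  refine initialDegree_le (homogeneousComponent_mem_of_mem hI hf m.degree) (fun h => ?_)
    (homogeneousComponent_isHomogeneous _ _)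
  have hcoeff := congrArg (coeff m) h
  rw [coeff_homogeneousComponent, if_pos rfl, coeff_zero] at hcoeff
  exact mem_support_iff.mp hm hcoeff

theorem exists_mem_isHomogeneous_initialDegree (hI : I.IsHomogeneous (homogeneousSubmodule σ K))
    (hI0 : I ≠ ⊥) : ∃ f ∈ I, f ≠ 0 ∧ f.IsHomogeneous (initialDegree K I) := by
  obtain ⟨f, hf, hf0⟩ := Submodule.exists_mem_ne_zero_of_ne_bot hI0
  obtain ⟨d, hd⟩ : ∃ d, homogeneousComponent d f ≠ 0 := by
    by_contra! h
    exact hf0 (by rw [← sum_homogeneousComponent f, Finset.sum_eq_zero fun d _ => h d])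
  exact Nat.sInf_mem (s := {d | ∃ f ∈ I, f ≠ 0 ∧ f.IsHomogeneous d}) ⟨d, _,
    homogeneousComponent_mem_of_mem hI hf d, hd, homogeneousComponent_isHomogeneous d f⟩

theorem initialDegree_pow (hI : I.IsHomogeneous (homogeneousSubmodule σ K)) (k : ℕ) :
    initialDegree K (I ^ k) = initialDegree K I * k := by
  rcases eq_or_ne I ⊥ with rfl | hI0
  · rcases eq_or_ne k 0 with rfl | hk
    · rw [pow_zero, Ideal.one_eq_top, initialDegree_top, mul_zero]
    · rw [← Ideal.zero_eq_bot, zero_pow hk, Ideal.zero_eq_bot, initialDegree_bot, zero_mul]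
  obtain ⟨f, hf, hf0, hfd⟩ := exists_mem_isHomogeneous_initialDegree hI hI0
  have hmem : f ^ k ∈ I ^ k := Ideal.pow_mem_pow hf k
  refine le_antisymm (initialDegree_le hmem (pow_ne_zero k hf0) (hfd.pow k)) ?_
  refine le_csInf ⟨_, f ^ k, hmem, pow_ne_zero k hf0, hfd.pow k⟩ ?_
  rintro d ⟨g, hg, hg0, hgd⟩
  refine le_of_mem_idealOfVars_pow hgd hg0 ?_
  rw [pow_mul]
  exact Ideal.pow_right_mono (le_idealOfVars_pow_initialDegree hI) k hg

theorem IsMonomialIdeal.mem_iff (hI : IsMonomialIdeal K I) {f : MvPolynomial σ K} :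
    f ∈ I ↔ ∀ m ∈ f.support, monomial m 1 ∈ I := by
  classical
  obtain ⟨A, rfl⟩ := hI
  simp [mem_ideal_span_monomial_image, support_monomial]

theorem IsMonomialIdeal.isHomogeneous (hI : IsMonomialIdeal K I) :
    I.IsHomogeneous (homogeneousSubmodule σ K) := by
  obtain ⟨A, rfl⟩ := hI
  refine Ideal.homogeneous_span _ _ ?_
  rintro _ ⟨m, -, rfl⟩
  exact ⟨m.degree, isHomogeneous_monomial 1 rfl⟩

theorem isMonomialIdeal_one : IsMonomialIdeal K (1 : Ideal (MvPolynomial σ K)) :=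
  ⟨{0}, by rw [Set.image_singleton, ← C_apply, C_1, Ideal.span_singleton_one, Ideal.one_eq_top]⟩

theorem IsMonomialIdeal.mul (hI : IsMonomialIdeal K I) (hJ : IsMonomialIdeal K J) :
    IsMonomialIdeal K (I * J) := by
  obtain ⟨A, rfl⟩ := hI
  obtain ⟨B, rfl⟩ := hJ
  refine ⟨Set.image2 (· + ·) A B, ?_⟩
  rw [Ideal.span_mul_span', ← Set.image2_mul, Set.image2_image_left, Set.image2_image_right,
    Set.image_image2]
  simp only [monomial_mul, one_mul]

theorem IsMonomialIdeal.pow (hI : IsMonomialIdeal K I) (k : ℕ) : IsMonomialIdeal K (I ^ k) := by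
  induction k with
  | zero => exact pow_zero I ▸ isMonomialIdeal_one
  | succ k ih => exact pow_succ I k ▸ ih.mul hI

theorem IsMonomialIdeal.exists_X_mem (hI : IsMonomialIdeal K I) (hI0 : I ≠ ⊥)
    {P : Ideal (MvPolynomial σ K)} (hP : P.IsPrime) (hIP : I ≤ P) : ∃ i, X i ∈ P := by
  obtain ⟨f, hf, hf0⟩ := Submodule.exists_mem_ne_zero_of_ne_bot hI0
  obtain ⟨m, hm⟩ := support_nonempty.mpr hf0
  obtain ⟨i, -, hi⟩ := exists_X_mem_of_monomial_mem hP (hIP (hI.mem_iff.mp hf m hm))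
  exact ⟨i, hi⟩

theorem IsMonomialIdeal.monomial_mem_colon_of_mem_support (hJ : IsMonomialIdeal K J) {u m : σ →₀ ℕ}
    {f : MvPolynomial σ K} (hf : f ∈ J.colon {monomial u 1}) (hm : m ∈ f.support) :
    monomial m 1 ∈ J.colon {monomial u 1} := by
  rw [Submodule.mem_colon_singleton, smul_eq_mul] at hf ⊢
  rw [monomial_mul, one_mul]
  refine hJ.mem_iff.mp hf _ ?_
  rw [mem_support_iff, coeff_mul_monomial, mul_one]
  exact mem_support_iff.mp hm

theorem IsMonomialIdeal.exists_isPrime_colon_monomial [Finite σ] (hJ : IsMonomialIdeal K J)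
    (hne : J ≠ ⊤) : ∃ u : σ →₀ ℕ, (J.colon {monomial u 1}).IsPrime := by
  let properColons : Set (Ideal (MvPolynomial σ K)) :=
    {P | P ≠ ⊤ ∧ ∃ u : σ →₀ ℕ, P = J.colon {monomial u 1}}
  have hnonempty : properColons.Nonempty :=
    ⟨J.colon {monomial 0 1}, by simpa [Ideal.ne_top_iff_one] using hne, 0, rfl⟩
  obtain ⟨_, ⟨hP, u, rfl⟩, hmax⟩ :=
    set_has_maximal_iff_noetherian.mpr inferInstance properColons hnonempty
  refine ⟨u, isPrime_of_forall_monomial hP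
    (fun _ hf _ => hJ.monomial_mem_colon_of_mem_support hf) fun a b hab => ?_⟩
  by_contra! ⟨ha, hb⟩
  have hproper : J.colon {monomial (b + u) 1} ≠ ⊤ := by
    simpa using monomial_mem_colon_monomial.not.mp hb
  have hlt : J.colon {monomial u 1} < J.colon {monomial (b + u) 1} := by
    refine (colon_monomial_le_colon_monomial_add J u b).lt_of_not_ge fun hge => ha (hge ?_)
    rw [monomial_mem_colon_monomial] at hab ⊢
    rwa [← add_assoc]
  exact hmax _ ⟨hproper, b + u, rfl⟩ hlt

theorem IsMonomialIdeal.initialDegree_le_add_one (hJ : IsMonomialIdeal K J) (hJ0 : J ≠ ⊥)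
    {f : MvPolynomial σ K} {d : ℕ} (hf : f.IsHomogeneous d) (hprime : (J.colon {f}).IsPrime) :
    initialDegree K J ≤ d + 1 := by
  have hf0 : f ≠ 0 := by
    rintro rfl
    exact hprime.ne_top Submodule.colon_singleton_zero
  obtain ⟨i, hi⟩ := hJ.exists_X_mem hJ0 hprime Ideal.le_colon
  rw [Submodule.mem_colon_singleton, smul_eq_mul, mul_comm] at hi
  exact initialDegree_le hi (mul_ne_zero hf0 (X_ne_zero i)) (hf.mul (isHomogeneous_X K i))

theorem IsMonomialIdeal.initialDegree_sub_one_le_vNumber [Finite σ] (hJ : IsMonomialIdeal K J) :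
    initialDegree K J - 1 ≤ vNumber K J := by
  rcases eq_or_ne J ⊥ with rfl | hbot
  · simp [initialDegree_bot]
  rcases eq_or_ne J ⊤ with rfl | htop
  · simp [initialDegree_top]
  simp only [vNumber, Ideal.colon_span]
  obtain ⟨u, hu⟩ := hJ.exists_isPrime_colon_monomial htop
  refine le_csInf ⟨u.degree, monomial u 1, isHomogeneous_monomial 1 rfl,
    colon_singleton_mem_associatedPrimes_quotient hu⟩ ?_
  rintro d ⟨f, hf, hass⟩
  exact Nat.sub_le_of_le_add (hJ.initialDegree_le_add_one hbot hf hass.isPrime)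

end Field

theorem stmt1_general {σ : Type*} [Finite σ] (I : Ideal (MvPolynomial σ K))
    (hI : IsMonomialIdeal K I) (k : ℕ) : initialDegree K I * k - 1 ≤ vNumber K (I ^ k) := by
  rw [← initialDegree_pow hI.isHomogeneous]
  exact (hI.pow k).initialDegree_sub_one_le_vNumber

/-- For a monomial ideal `I`, `v(I^k) ≥ α(I)·k - 1` for all `k ≥ 1`. -/
theorem stmt1 {n : ℕ} (I : Ideal (MvPolynomial (Fin n) K)) (hI : IsMonomialIdeal K I) :
    ∀ k : ℕ, 1 ≤ k → initialDegree K I * k - 1 ≤ vNumber K (I ^ k) :=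
  fun k _ => stmt1_general K I hI k

end
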